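/- Let G be a subgroup of the group of self-homeomorphisms of ℝ such that every G-orbit is dense in ℝ, and suppose there exists α ∈ G whose fixed point set {x : α(x) = x} is nonempty and discrete as a subspace of ℝ. Then the centralizer of G in the group of self-homeomorphisms of ℝ is a cyclic group. (If an element α acts on the leaf space with isolated fixed points and the action is minimal, then the slithering map Z is determined uniquely up to taking iterates; equivalently, there is a minimal slithering of which every other slithering inducing the same foliation is a finite cover.) -/

import Mathlib

/-!
The fixed set of a centralizing homeomorphism `z` is closed and `G`-invariant, so by minimality it
is empty or all of `ℝ`: the centralizer `C` acts freely on `ℝ` (`eq_one_of_fixed`).  A decreasing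
homeomorphism of `ℝ` has a fixed point, so every element of `C` is increasing
(`strictMono_of_mem_centralizer`).

Let `x₀` be a fixed point of `α`.  The orbit `C x₀` lies in the closed discrete set `Fix α`, so it
meets each bounded interval in a finite set (`finite_fixed_Icc`).  If `C` is nontrivial, there is
therefore `c ∈ C` moving `x₀` to the nearest point of `C x₀` on its right, and the points `c ^ n x₀`
eventually exceed any given bound.  If `z x₀ ≥ x₀`, division with remainder gives `n` such that
`c⁻ⁿ z` moves `x₀` into `[x₀, c x₀)`; hence it fixes `x₀`, and `z = c ^ n` by freeness.
-/

/-- The group of self-homeomorphisms of `ℝ`, with `(f * g) x = f (g x)`. -/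
instance : Group (ℝ ≃ₜ ℝ) where
  mul f g := g.trans f
  one := Homeomorph.refl ℝ
  inv f := f.symm
  mul_assoc f g h := rfl
  one_mul f := rfl
  mul_one f := rfl
  inv_mul_cancel f := Homeomorph.toEquiv_injective (Equiv.ext fun x => f.symm_apply_apply x)

namespace CentralizerOfMinimalAction

theorem mul_app (f g : ℝ ≃ₜ ℝ) (x : ℝ) : (f * g) x = f (g x) := rfl

theorem one_app (x : ℝ) : (1 : ℝ ≃ₜ ℝ) x = x := rfl

theorem inv_app_self (f : ℝ ≃ₜ ℝ) (x : ℝ) : f⁻¹ (f x) = x := f.symm_apply_apply x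

theorem comm_app {G : Subgroup (ℝ ≃ₜ ℝ)} {z g : ℝ ≃ₜ ℝ}
    (hz : z ∈ Subgroup.centralizer (G : Set (ℝ ≃ₜ ℝ))) (hg : g ∈ G) (x : ℝ) :
    g (z x) = z (g x) :=
  DFunLike.congr_fun (Subgroup.mem_centralizer_iff.1 hz g hg) x

/-- The centralizer of a minimal action acts freely. -/
theorem eq_one_of_fixed {G : Subgroup (ℝ ≃ₜ ℝ)}
    (hmin : ∀ x : ℝ, Dense {y : ℝ | ∃ g ∈ G, g x = y}) {z : ℝ ≃ₜ ℝ}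
    (hz : z ∈ Subgroup.centralizer (G : Set (ℝ ≃ₜ ℝ))) {x : ℝ} (hx : z x = x) : z = 1 := by
  have h : (z : ℝ → ℝ) = id := by
    refine Continuous.ext_on (hmin x) z.continuous continuous_id ?_
    rintro y ⟨g, hg, rfl⟩
    rw [← comm_app hz hg, hx, id]
  exact Homeomorph.ext fun y => congrFun h y

theorem strictMono_of_mem_centralizer {G : Subgroup (ℝ ≃ₜ ℝ)}
    (hmin : ∀ x : ℝ, Dense {y : ℝ | ∃ g ∈ G, g x = y}) {z : ℝ ≃ₜ ℝ}
    (hz : z ∈ Subgroup.centralizer (G : Set (ℝ ≃ₜ ℝ))) : StrictMono z := by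
  rcases z.continuous.strictMono_of_inj z.injective with h | h
  · exact h
  -- A decreasing map crosses the diagonal between `0` and `z 0`.
  obtain ⟨x, hx⟩ : ∃ x, z x = x := by
    rcases le_total 0 (z 0) with h0 | h0
    · exact intermediate_value_univ₂ z.continuous continuous_id (h.antitone h0) h0
    · exact intermediate_value_univ₂ z.continuous continuous_id h0 (h.antitone h0)
  have h1 := eq_one_of_fixed hmin hz hx
  subst h1
  exact fun a b hab => hab

theorem finite_fixed_Icc {α : ℝ ≃ₜ ℝ} (hd : DiscreteTopology {x : ℝ | α x = x}) (a b : ℝ) :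
    ({x : ℝ | α x = x} ∩ Set.Icc a b).Finite := by
  have hc : IsCompact ({x : ℝ | α x = x} ∩ Set.Icc a b) :=
    isCompact_Icc.inter_left (isClosed_eq α.continuous continuous_id)
  exact hc.finite (IsDiscrete.mono ⟨hd⟩ Set.inter_subset_left)

end CentralizerOfMinimalAction

open CentralizerOfMinimalAction in
/-- Let `G` be a subgroup of the group of self-homeomorphisms of `ℝ`
all of whose orbits are dense, containing an element `α` whose fixed point set is
nonempty and discrete.  Then the centralizer of `G` in the group of
self-homeomorphisms of `ℝ` is a cyclic group. -/
theorem centralizer_of_minimal_action_is_cyclic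
    (G : Subgroup (ℝ ≃ₜ ℝ))
    (hmin : ∀ x : ℝ, Dense {y : ℝ | ∃ g ∈ G, g x = y})
    (hα : ∃ α ∈ G, ({x : ℝ | α x = x}).Nonempty ∧
      DiscreteTopology {x : ℝ | α x = x}) :
    IsCyclic (Subgroup.centralizer (G : Set (ℝ ≃ₜ ℝ))) := by
  obtain ⟨α, hαG, ⟨x₀, hx₀⟩, hd⟩ := hα
  set C := Subgroup.centralizer (G : Set (ℝ ≃ₜ ℝ)) with hC
  have hfix : ∀ z ∈ C, α (z x₀) = z x₀ := fun z hz => by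
    rw [comm_app hz hαG, show α x₀ = x₀ from hx₀]
  have hmono : ∀ z ∈ C, StrictMono z := fun z hz => strictMono_of_mem_centralizer hmin hz
  -- It suffices to treat the elements moving `x₀` to the right, as one of `z`, `z⁻¹` does so.
  obtain ⟨c, hc, key⟩ : ∃ c ∈ C, ∀ z ∈ C, x₀ ≤ z x₀ → ∃ n : ℕ, c ^ n = z := by
    by_cases hex : ∃ b ∈ C, x₀ < b x₀
    · obtain ⟨b, hb, hbx⟩ := hex
      have hfin : {y : ℝ | ∃ z ∈ C, z x₀ = y ∧ x₀ < y ∧ y ≤ b x₀}.Finite := by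
        refine (finite_fixed_Icc hd x₀ (b x₀)).subset ?_
        rintro y ⟨z, hz, rfl, h1, h2⟩
        exact ⟨hfix z hz, h1.le, h2⟩
      obtain ⟨y, ⟨c, hc, rfl, hcx, hcb⟩, hleast⟩ :=
        hfin.exists_minimal ⟨b x₀, b, hb, rfl, hbx, le_rfl⟩
      have hcmin : ∀ w ∈ C, x₀ < w x₀ → c x₀ ≤ w x₀ := by
        intro w hw hwx
        by_contra! hlt
        exact hlt.not_ge (hleast ⟨w, hw, rfl, hwx, hlt.le.trans hcb⟩ hlt.le)
      have hsm : StrictMono fun n : ℕ => (c ^ n) x₀ := by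
        refine strictMono_nat_of_lt_succ fun n => ?_
        rw [pow_succ, mul_app]
        exact hmono _ (C.pow_mem hc n) hcx
      refine ⟨c, hc, fun z hz hzx => ?_⟩
      -- Otherwise infinitely many fixed points of `α` would lie in `[x₀, z x₀]`.
      have hn : ∃ n : ℕ, z x₀ < (c ^ n) x₀ := by
        by_contra! hle
        refine Set.infinite_of_injective_forall_mem hsm.injective (fun n => ?_)
          (finite_fixed_Icc hd x₀ (z x₀))
        refine ⟨hfix _ (C.pow_mem hc n), ?_, hle n⟩
        simpa [one_app] using hsm.monotone (Nat.zero_le n)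
      classical
      obtain ⟨m, hm1, hm2⟩ : ∃ m : ℕ, (c ^ m) x₀ ≤ z x₀ ∧ z x₀ < (c ^ (m + 1)) x₀ := by
        have hpos : Nat.find hn ≠ 0 := by
          intro h0
          have := Nat.find_spec hn
          rw [h0, pow_zero, one_app] at this
          exact this.not_ge hzx
        obtain ⟨m, hm⟩ := Nat.exists_eq_succ_of_ne_zero hpos
        have hspec := Nat.find_spec hn
        rw [hm] at hspec
        exact ⟨m, not_lt.1 (Nat.find_min hn (by omega)), hspec⟩
      have hcm := C.inv_mem (C.pow_mem hc m)
      have hw : (c ^ m)⁻¹ * z ∈ C := C.mul_mem hcm hz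
      have h1 : x₀ ≤ ((c ^ m)⁻¹ * z) x₀ := by
        have := (hmono _ hcm).monotone hm1
        rwa [inv_app_self] at this
      have h2 : ((c ^ m)⁻¹ * z) x₀ < c x₀ := by
        have := hmono _ hcm hm2
        rwa [pow_succ, mul_app, inv_app_self] at this
      have h3 : ((c ^ m)⁻¹ * z) x₀ = x₀ :=
        le_antisymm (not_lt.1 fun h => h2.not_ge (hcmin _ hw h)) h1
      exact ⟨m, inv_mul_eq_one.1 (eq_one_of_fixed hmin hw h3)⟩
    · push Not at hex
      exact ⟨1, C.one_mem, fun z hz hzx =>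
        ⟨0, (eq_one_of_fixed hmin hz (le_antisymm (hex z hz) hzx)).symm⟩⟩
  refine ⟨⟨c, hc⟩, fun ⟨z, hz⟩ => ?_⟩
  rcases le_total x₀ (z x₀) with h | h
  · obtain ⟨n, hn⟩ := key z hz h
    exact ⟨n, Subtype.ext (by simpa using hn)⟩
  · have hz' := C.inv_mem hz
    have h' : x₀ ≤ z⁻¹ x₀ := by
      have := (hmono _ hz').monotone h
      rwa [inv_app_self] at this
    obtain ⟨n, hn⟩ := key _ hz' h'
    exact ⟨-n, Subtype.ext (by simp [hn])⟩
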